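/- arXiv:1705.04912 — 3 statements merged into one kernel-verified Lean document; each statement's English description precedes it below -/
import Mathlib

section
/- Let α be the sequence α_i = F_{i+1} (i.e., α = (1, 1, 2, 3, 5, 8, …)). Then for every n ≥ 0, det T_{α̃,α}(n) = F_{n+2} and det T_{α,α̃}(n) = F_{n+2}. -/
/-- The Fibonacci sequence (as integers): `F 0 = 0`, `F 1 = 1`, `F n = F (n-1) + F (n-2)`. -/
def fibZ : ℕ → ℤ
  | 0 => 0
  | 1 => 1
  | n + 2 => fibZ (n + 1) + fibZ n

/-- The Toeplitz matrix `T_{α,β}(n)` of order `n+1`: entry `(i,j)` is `α (i-j)` if `i ≥ j`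
and `β (j-i)` if `i ≤ j` (consistent when `α 0 = β 0`). -/
def toeplitzM (α β : ℕ → ℤ) (n : ℕ) : Matrix (Fin (n + 1)) (Fin (n + 1)) ℤ :=
  Matrix.of fun i j => if (j : ℕ) ≤ (i : ℕ) then α ((i : ℕ) - (j : ℕ)) else β ((j : ℕ) - (i : ℕ))

def tE (i j : ℕ) : ℤ :=
  if j ≤ i then (-1) ^ (i - j) * fibZ (i - j + 1) else fibZ (j - i + 1)

theorem tE_rec (i j : ℕ) (h : i ≠ j + 1) : tE i (j + 2) - tE i (j + 1) - tE i j = 0 := by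
  unfold tE
  rcases lt_or_gt_of_ne h with h | h
  · rcases Nat.lt_or_ge i j with h1 | h1
    · obtain ⟨k, rfl⟩ := Nat.exists_eq_add_of_lt h1
      rw [if_neg (by omega), if_neg (by omega), if_neg (by omega)]
      rw [show i + k + 1 + 2 - i + 1 = k + 2 + 2 by omega,
        show i + k + 1 + 1 - i + 1 = k + 2 + 1 by omega,
        show i + k + 1 - i + 1 = k + 2 by omega, fibZ.eq_3 (k + 2)]
      ring
    · obtain rfl : i = j := by omega
      simp [fibZ]
  · obtain ⟨k, rfl⟩ := Nat.exists_eq_add_of_lt h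
    rw [if_pos (by omega), if_pos (by omega), if_pos (by omega)]
    rw [show j + 1 + k + 1 - (j + 2) = k by omega,
      show j + 1 + k + 1 - (j + 1) = k + 1 by omega,
      show j + 1 + k + 1 - j = k + 2 by omega, fibZ.eq_3 (k + 1), fibZ.eq_3 k]
    ring

theorem tE_sup (j : ℕ) : tE (j + 1) (j + 2) - tE (j + 1) (j + 1) - tE (j + 1) j = 1 := by
  simp [tE, fibZ, show j + 2 - (j + 1) = 1 by omega]

def gM (n m : ℕ) : Matrix (Fin (n + 1)) (Fin (n + 1)) ℤ :=
  Matrix.of fun i j => tE (if (i : ℕ) < n then i else m) j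

theorem det_gM_succ (n m : ℕ) (h : n + 2 ≤ m) : (gM (n + 2) m).det = - (gM (n + 1) m).det := by
  have hc : (gM (n + 2) m).det =
      ((gM (n + 2) m).updateCol (Fin.last (n + 2)) (fun i => if (i : ℕ) = n + 1 then 1 else 0)).det := by
    let a : Fin (n + 3) := ⟨n + 1, by omega⟩
    let b : Fin (n + 3) := ⟨n, by omega⟩
    have ha : Fin.last (n + 2) ≠ a := by simp [a, Fin.ext_iff]
    have hb : Fin.last (n + 2) ≠ b := by simp [b, Fin.ext_iff]
    rw [← Matrix.det_updateCol_add_smul_self (gM (n + 2) m) ha (-1),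
      ← Matrix.det_updateCol_add_smul_self _ hb (-1)]
    congr 1
    ext i j
    by_cases hj : j = Fin.last (n + 2)
    · subst hj
      simp only [Matrix.updateCol_apply, if_true, if_neg hb.symm, Pi.add_apply, Pi.smul_apply, Matrix.updateCol_self]
      simp only [gM, Matrix.of_apply, a, b, Fin.val_last, smul_eq_mul]
      have hi := i.2
      by_cases h1 : (i : ℕ) = n + 1
      · rw [if_pos (by omega), if_pos h1, h1]; linarith [tE_sup n]
      · rw [if_neg h1, ← tE_rec (if (i : ℕ) < n + 2 then i else m) n (by split_ifs <;> omega)]; ring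
    · simp [Matrix.updateCol_apply, hj]
  rw [hc, Matrix.det_succ_column _ (Fin.last (n + 2)),
    Finset.sum_eq_single (Fin.castSucc (Fin.last (n + 1)))]
  · have hs : (((gM (n + 2) m).updateCol (Fin.last (n + 2))
        (fun i => if (i : ℕ) = n + 1 then 1 else 0)).submatrix
        (Fin.castSucc (Fin.last (n + 1))).succAbove (Fin.last (n + 2)).succAbove) = gM (n + 1) m := by
      ext i j
      have hi := i.2
      have hj := j.2
      have e : ((Fin.castSucc j : Fin (n + 3))) ≠ Fin.last (n + 2) := by
        simp [Fin.ext_iff]; omega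
      simp only [Matrix.submatrix_apply, Fin.succAbove_last, Matrix.updateCol_ne e, gM, Matrix.of_apply,
        Fin.val_castSucc]
      congr 1
      by_cases h1 : (i : ℕ) < n + 1
      · rw [Fin.succAbove_of_castSucc_lt _ _ (by simp [Fin.lt_def]; omega)]
        simp only [Fin.val_castSucc]
        rw [if_pos (by omega), if_pos h1]
      · rw [Fin.succAbove_of_le_castSucc _ _ (by simp [Fin.le_def]; omega)]
        simp only [Fin.val_succ]
        rw [if_neg (by omega), if_neg h1]
    rw [hs]
    simp only [Matrix.updateCol_self, Fin.val_castSucc, Fin.val_last, if_true]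
    rw [show n + 1 + (n + 2) = 2 * (n + 1) + 1 by ring, pow_succ, pow_mul]
    simp
  · intro i _ hi
    have : (i : ℕ) ≠ n + 1 := fun h => hi (by ext; simpa using h)
    simp [this]
  · simp

theorem det_gM (n m : ℕ) (h : n + 1 ≤ m) :
    (gM (n + 1) m).det = (-1) ^ (n + m + 1) * fibZ (m + 2) := by
  induction n with
  | zero =>
    obtain ⟨k, rfl⟩ := Nat.exists_eq_add_of_le h
    rw [Matrix.det_fin_two]
    simp [gM, tE, fibZ, show 0 + 1 + k = k + 1 by omega, pow_succ]
    ring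
  | succ n ih =>
    rw [det_gM_succ n m h, ih (by omega)]
    ring

theorem det_first (n : ℕ) :
    (toeplitzM (fun i => (-1) ^ i * fibZ (i + 1)) (fun i => fibZ (i + 1)) n).det =
      fibZ (n + 2) := by
  have e : toeplitzM (fun i => (-1) ^ i * fibZ (i + 1)) (fun i => fibZ (i + 1)) n = gM n n := by
    ext i j
    have hi := i.2
    have : (if (i : ℕ) < n then (i : ℕ) else n) = i := by split_ifs <;> omega
    simp only [toeplitzM, gM, Matrix.of_apply, this, tE]
  rw [e]
  cases n with
  | zero => simp [gM, tE, fibZ]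
  | succ n =>
    rw [det_gM n _ le_rfl, show n + (n + 1) + 1 = 2 * (n + 1) by ring, pow_mul]
    simp

theorem det_toeplitz_fib_succ (n : ℕ) :
    (toeplitzM (fun i => (-1) ^ i * fibZ (i + 1)) (fun i => fibZ (i + 1)) n).det =
      fibZ (n + 2) ∧
    (toeplitzM (fun i => fibZ (i + 1)) (fun i => (-1) ^ i * fibZ (i + 1)) n).det =
      fibZ (n + 2) := by
  refine ⟨det_first n, ?_⟩
  rw [← det_first n, ← Matrix.det_transpose]
  congr 1
  ext i j
  simp only [toeplitzM, Matrix.transpose_apply, Matrix.of_apply]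
  rcases lt_trichotomy (i : ℕ) j with h | h | h
  · rw [if_pos h.le, if_neg (by omega)]
  · simp [h]
  · rw [if_neg (by omega), if_pos h.le]
end

section
/- Let α be the sequence α_i = F_{i+1}, let α̃_i = (−1)^i·α_i, and let α̌ and (α̃)̌ denote the binomial transforms of α and α̃ respectively. Then for every n ≥ 0, det A_{(α̃)̌, α}(n) = F_{n+2} and det A_{α̌, α̃}(n) = F_{n+2}. -/
/-- The binomial transform: `α̌_i = Σ_{k=0}^{i} C(i,k) * α_k`. -/
def btrans (α : ℕ → ℤ) (i : ℕ) : ℤ :=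
  ∑ k ∈ Finset.range (i + 1), (i.choose k : ℤ) * α k

/-- Entry of the 7-matrix `A_{α,β}`:
`A (i,0) = α i`, `A (0,j) = β j`, and `A (i,j) = A (i-1,j-1) + A (i-1,j)` for `i,j ≥ 1`
(consistent when `α 0 = β 0`). -/
def sevenEntry (α β : ℕ → ℤ) : ℕ → ℕ → ℤ
  | 0, j => β j
  | i + 1, 0 => α (i + 1)
  | i + 1, j + 1 => sevenEntry α β i j + sevenEntry α β i (j + 1)

/-- The 7-matrix `A_{α,β}(n)` of order `n+1`. -/
def sevenM (α β : ℕ → ℤ) (n : ℕ) : Matrix (Fin (n + 1)) (Fin (n + 1)) ℤ :=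
  Matrix.of fun i j => sevenEntry α β (i : ℕ) (j : ℕ)

def toep (γ β : ℕ → ℤ) (k j : ℕ) : ℤ := if k ≤ j then β (j - k) else γ (k - j)

theorem toep_succ (γ β : ℕ → ℤ) (k j : ℕ) : toep γ β (k+1) (j+1) = toep γ β k j := by
  simp [toep]

theorem seven_fac (γ β : ℕ → ℤ) (h : γ 0 = β 0) (i : ℕ) : ∀ (j N : ℕ), i < N →
    sevenEntry (btrans γ) β i j = ∑ k ∈ Finset.range N, (i.choose k : ℤ) * toep γ β k j := by
  induction i with
  | zero =>
    intro j N hN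
    obtain ⟨N, rfl⟩ : ∃ M, N = M + 1 := ⟨N - 1, by omega⟩
    rw [Finset.sum_range_succ']
    simp [sevenEntry, toep]
  | succ i ih =>
    intro j N hN
    obtain ⟨N, rfl⟩ : ∃ M, N = M + 1 := ⟨N - 1, by omega⟩
    cases j with
    | zero =>
      simp only [sevenEntry, btrans]
      rw [← Finset.sum_subset (s₁ := Finset.range (i + 1 + 1)) (s₂ := Finset.range (N + 1))
        (f := fun k => ((i + 1).choose k : ℤ) * toep γ β k 0)]
      · apply Finset.sum_congr rfl
        intro k _
        congr 1
        rcases k with _ | k <;> simp [toep, h]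
      · intro x hx
        simp only [Finset.mem_range] at *
        omega
      · intro x _ hx
        simp only [Finset.mem_range, not_lt] at hx
        rw [Nat.choose_eq_zero_of_lt (by omega)]
        simp
    | succ j =>
      simp only [sevenEntry]
      rw [ih j N (by omega), ih (j+1) (N+1) (by omega), Finset.sum_range_succ',
        Finset.sum_range_succ', ← add_assoc, ← Finset.sum_add_distrib]
      congr 1
      · apply Finset.sum_congr rfl
        intro k _
        rw [Nat.choose_succ_succ, toep_succ]
        push_cast
        ring
      · simp

theorem seven_det (γ β : ℕ → ℤ) (h : γ 0 = β 0) (n : ℕ) :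
    (sevenM (btrans γ) β n).det
      = (Matrix.of fun i j : Fin (n+1) => toep γ β i j).det := by
  have h1 : sevenM (btrans γ) β n =
      (Matrix.of fun i k : Fin (n+1) => ((i : ℕ).choose k : ℤ)) *
      (Matrix.of fun i j : Fin (n+1) => toep γ β i j) := by
    ext i j
    simp only [sevenM, Matrix.of_apply, Matrix.mul_apply]
    rw [seven_fac γ β h i j (n+1) i.2, Finset.sum_range]
  rw [h1, Matrix.det_mul, Matrix.det_of_lowerTriangular]
  · simp
  · intro i k hik
    have : (i : ℕ) < k := hik
    simp [Nat.choose_eq_zero_of_lt this]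

def tf (i j : ℕ) : ℤ := toep (fun i => (-1) ^ i * fibZ (i + 1)) (fun i => fibZ (i + 1)) i j

def uf (k j : ℕ) : ℤ :=
  (if k = j then 1 else 0) - (if k + 1 = j then 1 else 0) - (if k + 2 = j then 1 else 0)

def mf (i j : ℕ) : ℤ :=
  if j = 0 then (-1) ^ i * fibZ (i + 1) else
  if j = 1 then (if i = 0 then 0 else (-1) ^ (i+1) * fibZ (i + 2)) else
  if i + 1 = j then 1 else 0

theorem fibZ_add (n : ℕ) : fibZ (n + 2) = fibZ (n + 1) + fibZ n := rfl

theorem tf_zero (i : ℕ) : tf i 0 = (-1) ^ i * fibZ (i + 1) := by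
  rcases i with _ | i <;> simp [tf, toep]

theorem tf_zero' (i : ℕ) : tf 0 i = fibZ (i + 1) := by
  simp [tf, toep]

theorem tf_succ (i j : ℕ) : tf (i+1) (j+1) = tf i j := toep_succ _ _ _ _

theorem tf_rec (i : ℕ) : ∀ j, tf i (j+2) - tf i (j+1) - tf i j = if i = j + 1 then 1 else 0 := by
  induction i with
  | zero => intro j; simp [tf_zero', fibZ_add (j+1)]
  | succ i ih =>
    intro j
    cases j with
    | zero =>
      rw [tf_succ, tf_succ, tf_zero, tf_zero]
      rcases i with _ | i
      · simp [tf_zero', fibZ]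
      · rw [tf_succ, tf_zero]
        simp only [fibZ_add]
        simp
        ring
    | succ j => simpa [tf_succ] using ih j

theorem mul_entry (n i j : ℕ) (hj : j < n + 1) :
    ∑ k ∈ Finset.range (n+1), tf i k * uf k j = mf i j := by
  rcases j with _ | _ | j
  · simp [uf, mf, tf_zero]
  · have h0 : 0 < n + 1 := by omega
    simp [uf, mf, mul_sub, Finset.sum_sub_distrib]
    rw [if_pos (by omega)]
    rcases i with _ | i
    · simp [tf_zero', fibZ]
    · rw [tf_zero, tf_succ, tf_zero]
      simp [fibZ_add (i+1)]
      ring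
  · have h1 : j + 1 < n + 1 := by omega
    have h2 : j < n + 1 := by omega
    have := tf_rec i j
    simp only [uf, mf, mul_sub, Finset.sum_sub_distrib, Nat.add_right_cancel_iff, mul_ite, mul_one,
      mul_zero, Finset.sum_ite_eq', Finset.mem_range, show ∀ k, (k + 1 = j + 1 + 1 ↔ k = j + 1) by omega,
      show ∀ k, (k + 2 = j + 1 + 1 ↔ k = j) by omega, hj, h1, h2, if_true]
    simpa using this

theorem det_tf (n : ℕ) : (Matrix.of fun i j : Fin (n+1) => tf i j).det = fibZ (n + 2) := by
  have hU : (Matrix.of fun i j : Fin (n+1) => uf i j).det = 1 := by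
    rw [Matrix.det_of_upperTriangular]
    · simp [uf]
    · intro i k hik
      have : (k : ℕ) < i := hik
      simp only [uf, Matrix.of_apply]
      rw [if_neg (by omega), if_neg (by omega), if_neg (by omega)]
      simp
  have hM : (Matrix.of fun i j : Fin (n+1) => tf i j) * (Matrix.of fun i j : Fin (n+1) => uf i j)
      = Matrix.of fun i j : Fin (n+1) => mf i j := by
    ext i j
    simp only [Matrix.of_apply, Matrix.mul_apply]
    rw [← mul_entry n i j j.2, Finset.sum_range]
  rw [← mul_one (Matrix.det _), ← hU, ← Matrix.det_mul, hM]
  rw [Matrix.det_succ_row_zero, Fin.sum_univ_succ, Finset.sum_eq_zero]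
  · rcases n with _ | m
    · simp [mf, fibZ]
    · rw [Matrix.det_succ_row _ (Fin.last m), Fin.sum_univ_succ, Finset.sum_eq_zero]
      · have : ((Matrix.of fun i j : Fin (m+1+1) => mf i j).submatrix Fin.succ
            (Fin.succAbove 0)).submatrix (Fin.last m).succAbove (Fin.succAbove 0) = 1 := by
          ext i j
          simp only [mf, Matrix.one_apply, Matrix.submatrix_apply, Matrix.of_apply, Fin.ext_iff,
            Fin.succAbove_last, Fin.zero_succAbove, Fin.val_succ, Fin.val_castSucc]
          rw [if_neg (by omega), if_neg (by omega)]
          simp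
        rw [this]
        simp [mf, fibZ]
        rw [← mul_assoc, ← pow_add, Even.neg_one_pow ⟨m + 1, by ring⟩]
        simp
      · intro x _
        have := x.2
        simp [mf]
        omega
  · intro x _
    have : mf ((0 : Fin (n+1)) : ℕ) (x.succ : ℕ) = 0 := by
      rw [Fin.val_succ, Fin.val_zero, mf, if_neg (Nat.succ_ne_zero _), if_pos rfl]
      by_cases h : (x : ℕ) + 1 = 1
      · rw [if_pos h]
      · rw [if_neg h, if_neg (by omega)]
    rw [Matrix.of_apply, this]
    simp

theorem det_seven_fib_succ (n : ℕ) :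
    (sevenM (btrans fun i => (-1) ^ i * fibZ (i + 1)) (fun i => fibZ (i + 1)) n).det =
      fibZ (n + 2) ∧
    (sevenM (btrans fun i => fibZ (i + 1)) (fun i => (-1) ^ i * fibZ (i + 1)) n).det =
      fibZ (n + 2) := by
  constructor
  · rw [seven_det _ _ (by simp)]
    exact det_tf n
  · rw [seven_det _ _ (by simp), ← Matrix.det_transpose, ← det_tf n]
    congr 1
    ext i j
    simp only [Matrix.transpose_apply, Matrix.of_apply, tf, toep]
    rcases lt_trichotomy (i : ℕ) j with h | h | h
    · rw [if_neg (by omega), if_pos (by omega)]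
    · simp [h]
    · rw [if_pos (by omega), if_neg (by omega)]
end

section
/- Let c be a complex number and let (a,b) = (c + 1, c − 2) or (a,b) = (c − 2, c + 1). Then for every positive integer n, det T_n(a,b,c) = c·J_n + 2·J_{n−1}, where J is the Jacobsthal sequence. -/
/-- `T_n(a,b,c)`: the `n × n` Toeplitz matrix with diagonal entries `c`, entries strictly
above the diagonal `a`, and entries strictly below the diagonal `b`. -/
def toeplitz3 (a b c : ℂ) (n : ℕ) : Matrix (Fin n) (Fin n) ℂ :=
  Matrix.of fun i j => if (i : ℕ) = (j : ℕ) then c else if (i : ℕ) < (j : ℕ) then a else b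

/-- The Jacobsthal sequence: `J 0 = 0`, `J 1 = 1`, `J n = J (n-1) + 2 * J (n-2)`. -/
def jacobsthalZ : ℕ → ℤ
  | 0 => 0
  | 1 => 1
  | n + 2 => jacobsthalZ (n + 1) + 2 * jacobsthalZ n

theorem toeplitz3_rec (a b c : ℂ) (n : ℕ) :
    (toeplitz3 a b c (n + 2)).det =
      (2 * c - a - b) * (toeplitz3 a b c (n + 1)).det
        - (a - c) * (b - c) * (toeplitz3 a b c n).det := by
  have h01 : (0 : Fin (n + 2)) ≠ 1 := by simp [Fin.ext_iff]
  set M := toeplitz3 a b c (n + 2) with hM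
  set M1 := M.updateRow 0 (M 0 + (-1 : ℂ) • M 1) with hM1
  have e1 : M1.det = M.det := Matrix.det_updateRow_add_smul_self M h01 (-1)
  set M2 := M1.updateCol 0 (fun k => M1 k 0 + (-1 : ℂ) • M1 k 1) with hM2
  have e2 : M2.det = M1.det := Matrix.det_updateCol_add_smul_self M1 h01 (-1)
  have r0 : M2 0 0 = 2 * c - a - b := by
    simp [hM2, hM1, hM, Matrix.updateCol_apply, Matrix.updateRow_apply, toeplitz3]
    ring
  have r1 : M2 0 1 = a - c := by
    simp [hM2, hM1, hM, Matrix.updateCol_apply, Matrix.updateRow_apply, toeplitz3]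
    ring
  have r2 : ∀ j : Fin n, M2 0 j.succ.succ = 0 := by
    intro j
    simp [hM2, hM1, hM, Matrix.updateCol_apply, Matrix.updateRow_apply, toeplitz3]
    rw [if_pos (by simp [Fin.lt_def])]
    ring
  have c1 : M2 1 0 = b - c := by
    simp [hM2, hM1, hM, Matrix.updateCol_apply, Matrix.updateRow_apply, toeplitz3]
    ring
  have c2 : ∀ j : Fin n, M2 j.succ.succ 0 = 0 := by
    intro j
    simp [hM2, hM1, hM, Matrix.updateCol_apply, Matrix.updateRow_apply, toeplitz3]
  have s1 : M2.submatrix Fin.succ Fin.succ = toeplitz3 a b c (n + 1) := by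
    ext i j
    simp [hM2, hM1, hM, Matrix.updateCol_apply, Matrix.updateRow_apply, toeplitz3]
  have s2 : (M2.submatrix Fin.succ (Fin.succAbove 1)).det = (b - c) * (toeplitz3 a b c n).det := by
    rw [Matrix.det_succ_column_zero, Fin.sum_univ_succ, Finset.sum_eq_zero]
    · have : (M2.submatrix Fin.succ (Fin.succAbove 1)).submatrix (Fin.succAbove 0) Fin.succ
          = toeplitz3 a b c n := by
        ext i j
        have : (Fin.succAbove 1 j.succ : Fin (n + 2)) = j.succ.succ := by
          rw [← Fin.succ_zero_eq_one, Fin.succ_succAbove_succ]; simp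
        simp [this, hM2, hM1, hM, Matrix.updateCol_apply, Matrix.updateRow_apply, toeplitz3]
      rw [this]
      simp [c1]
    · intro j _
      simp [c2]
  rw [← e1, ← e2, Matrix.det_succ_row_zero, Fin.sum_univ_succ, Fin.sum_univ_succ,
    Finset.sum_eq_zero (s := Finset.univ (α := Fin n))]
  · rw [Fin.succ_zero_eq_one, s2, Fin.succAbove_zero, s1, r0, r1]
    simp
    ring
  · intro j _
    simp [r2]

/-- If `(a,b) = (c + 1, c - 2)` or `(a,b) = (c - 2, c + 1)`, then for every `n ≥ 1`,
`det T_n(a,b,c) = c * J_n + 2 * J_{n-1}`. -/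
theorem det_toeplitz3_jacobsthal (a b c : ℂ)
    (h : (a = c + 1 ∧ b = c - 2) ∨ (a = c - 2 ∧ b = c + 1)) :
    ∀ n : ℕ, 1 ≤ n →
      (toeplitz3 a b c n).det = c * (jacobsthalZ n : ℂ) + 2 * (jacobsthalZ (n - 1) : ℂ) := by
  have h1 : 2 * c - a - b = 1 := by
    rcases h with ⟨rfl, rfl⟩ | ⟨rfl, rfl⟩ <;> ring
  have h2 : (a - c) * (b - c) = -2 := by
    rcases h with ⟨rfl, rfl⟩ | ⟨rfl, rfl⟩ <;> ring
  have d0 : (toeplitz3 a b c 0).det = 1 := Matrix.det_fin_zero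
  have d1 : (toeplitz3 a b c 1).det = c := by simp [toeplitz3]
  have key : ∀ n : ℕ,
      (toeplitz3 a b c (n + 1)).det = c * (jacobsthalZ (n + 1) : ℂ) + 2 * (jacobsthalZ n : ℂ) ∧
      (toeplitz3 a b c (n + 2)).det
        = c * (jacobsthalZ (n + 2) : ℂ) + 2 * (jacobsthalZ (n + 1) : ℂ) := by
    intro n
    induction n with
    | zero =>
      refine ⟨by rw [d1]; simp [jacobsthalZ], ?_⟩
      rw [toeplitz3_rec, h1, h2, d0, d1]
      simp [jacobsthalZ]
    | succ k ih =>
      refine ⟨ih.2, ?_⟩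
      rw [toeplitz3_rec, h1, h2, ih.1, ih.2]
      simp only [jacobsthalZ]
      push_cast
      ring
  intro n hn
  obtain ⟨m, rfl⟩ : ∃ m, n = m + 1 := ⟨n - 1, by omega⟩
  exact (key m).1
end
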